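/- arXiv:1901.01872 — 2 statements merged into one kernel-verified Lean document; each statement's English description precedes it below -/
import Mathlib

section
/- If the stepsize parameter satisfies 0 < ε < min{1/2, 2π(λ/Λ)²}, then the asynchronous network Newton iterates converge linearly in expectation to the minimizer: for all t ≥ 0, E[‖x(t) − x*‖] ≤ (2(F(x(0)) − F*)/(αm))^{1/2} ((1 − β)^{1/2})^t, where β = αmε(2πλ² − εΛ²)/(λπ) and ‖·‖ is the Euclidean norm. -/
open Matrix BigOperators

noncomputable section

/-- Second derivative of the `i`-th local objective. -/
def d2 {n : ℕ} (f : Fin n → ℝ → ℝ) (i : Fin n) (s : ℝ) : ℝ := deriv (deriv (f i)) s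

/-- The diagonal matrix `G(x)` with `G(x)_ii = f_i''(x_i)`. -/
def Gmat {n : ℕ} (f : Fin n → ℝ → ℝ) (x : Fin n → ℝ) : Matrix (Fin n) (Fin n) ℝ :=
  Matrix.diagonal (fun i => d2 f i (x i))

/-- The Hessian `H(x) = I − W + αG(x)` of the penalized objective. -/
def Hmat {n : ℕ} (W : Matrix (Fin n) (Fin n) ℝ) (f : Fin n → ℝ → ℝ) (α : ℝ)
    (x : Fin n → ℝ) : Matrix (Fin n) (Fin n) ℝ :=
  1 - W + α • Gmat f x

/-- `B = I − 2W_d + W`. -/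
def Bmat {n : ℕ} (W : Matrix (Fin n) (Fin n) ℝ) : Matrix (Fin n) (Fin n) ℝ :=
  1 - (2 : ℝ) • Matrix.diagonal (fun i => W i i) + W

/-- Diagonal entries of the splitting matrix `D(x) = αG(x) + 2(I − W_d)`. -/
def dEntry {n : ℕ} (W : Matrix (Fin n) (Fin n) ℝ) (f : Fin n → ℝ → ℝ) (α : ℝ)
    (x : Fin n → ℝ) (i : Fin n) : ℝ :=
  α * d2 f i (x i) + 2 * (1 - W i i)

/-- `D(x) = αG(x) + 2(I − W_d)`. -/
def Dmat {n : ℕ} (W : Matrix (Fin n) (Fin n) ℝ) (f : Fin n → ℝ → ℝ) (α : ℝ)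
    (x : Fin n → ℝ) : Matrix (Fin n) (Fin n) ℝ :=
  Matrix.diagonal (dEntry W f α x)

/-- `D(x)^{1/2}`. -/
def Dhalf {n : ℕ} (W : Matrix (Fin n) (Fin n) ℝ) (f : Fin n → ℝ → ℝ) (α : ℝ)
    (x : Fin n → ℝ) : Matrix (Fin n) (Fin n) ℝ :=
  Matrix.diagonal (fun i => Real.sqrt (dEntry W f α x i))

/-- `D(x)^{-1/2}`. -/
def Dinvhalf {n : ℕ} (W : Matrix (Fin n) (Fin n) ℝ) (f : Fin n → ℝ → ℝ) (α : ℝ)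
    (x : Fin n → ℝ) : Matrix (Fin n) (Fin n) ℝ :=
  Matrix.diagonal (fun i => (Real.sqrt (dEntry W f α x i))⁻¹)

/-- The approximate Hessian inverse
`Ĥ(x)⁻¹ = D(x)^{-1/2}(I + D(x)^{-1/2} B D(x)^{-1/2}) D(x)^{-1/2}`. -/
def Hhatinv {n : ℕ} (W : Matrix (Fin n) (Fin n) ℝ) (f : Fin n → ℝ → ℝ) (α : ℝ)
    (x : Fin n → ℝ) : Matrix (Fin n) (Fin n) ℝ :=
  Dinvhalf W f α x * (1 + Dinvhalf W f α x * Bmat W * Dinvhalf W f α x) * Dinvhalf W f α x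

/-- The penalized objective `F(x) = (1/2) xᵀ(I−W)x + α Σᵢ f_i(x_i)`. -/
def Fobj {n : ℕ} (W : Matrix (Fin n) (Fin n) ℝ) (f : Fin n → ℝ → ℝ) (α : ℝ)
    (x : Fin n → ℝ) : ℝ :=
  (1 / 2) * (x ⬝ᵥ ((1 - W).mulVec x)) + α * ∑ i, f i (x i)

/-- The gradient `g(x) = (I − W)x + α (f_i'(x_i))_i` of the penalized objective. -/
def gvec {n : ℕ} (W : Matrix (Fin n) (Fin n) ℝ) (f : Fin n → ℝ → ℝ) (α : ℝ)
    (x : Fin n → ℝ) : Fin n → ℝ :=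
  fun i => ((1 - W).mulVec x) i + α * deriv (f i) (x i)

/-- The asynchronous update `x^(i)`: agent `i` moves along the approximate Newton
direction with stepsize `ε / p i`; other coordinates are unchanged. -/
def upd {n : ℕ} (W : Matrix (Fin n) (Fin n) ℝ) (f : Fin n → ℝ → ℝ) (α : ℝ)
    (p : Fin n → ℝ) (ε : ℝ) (x : Fin n → ℝ) (i : Fin n) : Fin n → ℝ :=
  Function.update x i (x i - (ε / p i) * ((Hhatinv W f α x).mulVec (gvec W f α x)) i)

/-- Euclidean norm on `ℝⁿ`. -/
def enorm {n : ℕ} (v : Fin n → ℝ) : ℝ := Real.sqrt (∑ i, v i ^ 2)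

/-!
The splitting `D₀ - B = I - W` with `D₀ = 2(I - W_d)` shows `0 ≤ B ≤ D₀` in the Loewner order, both
inequalities being diagonal dominance. Since `Ĥ⁻¹ = D⁻¹ + D⁻¹ B D⁻¹`, this squeezes `Ĥ⁻¹` between
diagonal matrices, whence `λ I ≤ Ĥ⁻¹ ≤ Λ I`.

Along one coordinate `F` has curvature at most `1 / λ`, so a random coordinate step with weights
`ε / p i` decreases `F` in expectation by at least `ε gᵀd - ε² ‖d‖² / (2πλ)`, where `d = Ĥ⁻¹ g`.
The spectral bounds turn this into a multiple of `‖g‖²`, which dominates `F - F*` by strong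
convexity: the optimality gap contracts in expectation by the factor `1 - β`. The iterate at time
`t` depends only on the activations up to time `t`, so independence lets the contraction be
iterated. Quadratic growth bounds the distance to the minimizer by the square root of the gap, and
Jensen's inequality passes the square root through the expectation.
-/

theorem convexOn_add_deriv_mul_sub_le {f : ℝ → ℝ} {S : Set ℝ} {x y : ℝ} (hf : ConvexOn ℝ S f)
    (hx : x ∈ S) (hy : y ∈ S) (hd : DifferentiableAt ℝ f x) :
    f x + deriv f x * (y - x) ≤ f y := by
  rcases lt_trichotomy x y with hxy | rfl | hyx
  · have hslope := hf.deriv_le_slope hx hy hxy hd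
    rw [slope_def_field, le_div_iff₀ (sub_pos.mpr hxy)] at hslope
    linarith
  · simp
  · have hslope := hf.slope_le_deriv hy hx hyx hd
    rw [slope_def_field, div_le_iff₀ (sub_pos.mpr hyx)] at hslope
    linarith

section SecondDerivative

variable {f : ℝ → ℝ} (hf : Differentiable ℝ f) (hf' : Differentiable ℝ (deriv f))
include hf hf'

theorem add_deriv_mul_add_sq_le_of_le_deriv2 {m : ℝ} (hm : ∀ s, m ≤ deriv (deriv f) s) (s v : ℝ) :
    f s + deriv f s * v + m / 2 * v ^ 2 ≤ f (s + v) := by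
  set h : ℝ → ℝ := fun t => f t - m / 2 * t ^ 2
  have hderiv : ∀ t, HasDerivAt h (deriv f t - m * t) t := fun t => by
    refine ((hf t).hasDerivAt.sub ((hasDerivAt_pow 2 t).const_mul (m / 2))).congr_deriv ?_
    norm_num
    ring
  have hderiv2 : ∀ t, HasDerivAt (deriv h) (deriv (deriv f) t - m) t := fun t => by
    rw [funext fun t => (hderiv t).deriv]
    simpa using (hf' t).hasDerivAt.fun_sub ((hasDerivAt_id t).const_mul m)
  have hconv : ConvexOn ℝ Set.univ h :=
    convexOn_univ_of_deriv2_nonneg (fun t => (hderiv t).differentiableAt)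
      (fun t => (hderiv2 t).differentiableAt) fun t => by
        simpa [(hderiv2 t).deriv] using hm t
  have htangent := convexOn_add_deriv_mul_sub_le hconv (Set.mem_univ s) (Set.mem_univ (s + v))
    (hderiv s).differentiableAt
  rw [(hderiv s).deriv] at htangent
  linear_combination htangent

theorem le_add_deriv_mul_add_sq_of_deriv2_le {M : ℝ} (hM : ∀ s, deriv (deriv f) s ≤ M) (s v : ℝ) :
    f (s + v) ≤ f s + deriv f s * v + M / 2 * v ^ 2 := by
  have hneg := add_deriv_mul_add_sq_le_of_le_deriv2 (f := -f) (m := -M) hf.neg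
    (by simpa [deriv.neg'] using hf'.neg) (fun s => by simpa [deriv.neg'] using hM s) s v
  simp only [Pi.neg_apply, deriv.neg] at hneg
  linear_combination hneg

end SecondDerivative

section Matrix

variable {ι : Type*} [Fintype ι]

open scoped ComplexOrder in
theorem posSemidef_of_sum_erase_norm_le {𝕜 : Type*} [RCLike 𝕜] [DecidableEq ι] {A : Matrix ι ι 𝕜}
    (hA : A.IsHermitian) (hdom : ∀ i, ∑ j ∈ Finset.univ.erase i, ‖A i j‖ ≤ RCLike.re (A i i)) :
    A.PosSemidef := by
  refine hA.posSemidef_iff_eigenvalues_nonneg.mpr fun k => ?_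
  have heigenvalue : Module.End.HasEigenvalue (Matrix.toLin' A) (hA.eigenvalues k : 𝕜) := by
    rw [Module.End.hasEigenvalue_iff_mem_spectrum, Matrix.spectrum_toLin',
      hA.spectrum_eq_image_range]
    exact Set.mem_image_of_mem _ (Set.mem_range_self k)
  obtain ⟨i, hi⟩ := eigenvalue_mem_ball heigenvalue
  have hre : RCLike.re (A i i) - hA.eigenvalues k ≤ ‖A i i - hA.eigenvalues k‖ := by
    simpa using RCLike.re_le_norm (A i i - (hA.eigenvalues k : 𝕜))
  rw [mem_closedBall_iff_norm'] at hi
  simpa using hre.trans (hi.trans (hdom i))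

theorem dotProduct_mulVec_comm {R : Type*} [CommSemiring R] {A : Matrix ι ι R} (hA : A.IsSymm)
    (u v : ι → R) : u ⬝ᵥ A *ᵥ v = v ⬝ᵥ A *ᵥ u := by
  rw [Matrix.dotProduct_mulVec, ← Matrix.mulVec_transpose, hA.eq, dotProduct_comm]

section Loewner

open scoped MatrixOrder

variable {A B : Matrix ι ι ℝ}

theorem dotProduct_mulVec_le_of_le (hAB : A ≤ B) (v : ι → ℝ) : v ⬝ᵥ A *ᵥ v ≤ v ⬝ᵥ B *ᵥ v := by
  simpa [Matrix.sub_mulVec] using (Matrix.le_iff.mp hAB).dotProduct_mulVec_nonneg v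

variable [DecidableEq ι]

omit [Fintype ι] in
theorem diagonal_mono {u v : ι → ℝ} (huv : u ≤ v) : diagonal u ≤ diagonal v := by
  rw [Matrix.le_iff, diagonal_sub]
  exact PosSemidef.diagonal (sub_nonneg.mpr huv)

theorem dotProduct_smul_one_mulVec (c : ℝ) (v : ι → ℝ) :
    v ⬝ᵥ (c • (1 : Matrix ι ι ℝ)) *ᵥ v = c * (v ⬝ᵥ v) := by
  simp [Matrix.smul_mulVec]

theorem mulVec_dotProduct_mulVec_le {c : ℝ} (hc : 0 < c) (hA : 0 ≤ A) (hAc : A ≤ c • 1)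
    (v : ι → ℝ) : A *ᵥ v ⬝ᵥ A *ᵥ v ≤ c ^ 2 * (v ⬝ᵥ v) := by
  have hle (u : ι → ℝ) : u ⬝ᵥ A *ᵥ u ≤ c * (u ⬝ᵥ u) :=
    (dotProduct_mulVec_le_of_le hAc u).trans_eq (dotProduct_smul_one_mulVec c u)
  have hsymm : A.IsSymm := (Matrix.nonneg_iff_posSemidef.mp hA).isHermitian
  have hexpand : (c • v - A *ᵥ v) ⬝ᵥ A *ᵥ (c • v - A *ᵥ v) = c ^ 2 * (v ⬝ᵥ A *ᵥ v)
      - 2 * c * (A *ᵥ v ⬝ᵥ A *ᵥ v) + A *ᵥ v ⬝ᵥ A *ᵥ (A *ᵥ v) := by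
    simp only [mulVec_sub, mulVec_smul, sub_dotProduct, dotProduct_sub, smul_dotProduct,
      dotProduct_smul, smul_eq_mul, dotProduct_mulVec_comm hsymm v (A *ᵥ v)]
    ring
  have hnonneg : 0 ≤ (c • v - A *ᵥ v) ⬝ᵥ A *ᵥ (c • v - A *ᵥ v) := by
    simpa using dotProduct_mulVec_le_of_le hA (c • v - A *ᵥ v)
  have hform : A *ᵥ v ⬝ᵥ A *ᵥ v ≤ c * (v ⬝ᵥ A *ᵥ v) :=
    le_of_mul_le_mul_left (by linarith [hle (A *ᵥ v)]) hc
  calc A *ᵥ v ⬝ᵥ A *ᵥ v ≤ c * (v ⬝ᵥ A *ᵥ v) := hform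
    _ ≤ c * (c * (v ⬝ᵥ v)) := mul_le_mul_of_nonneg_left (hle v) hc.le
    _ = c ^ 2 * (v ⬝ᵥ v) := by ring

end Loewner

end Matrix

section Splitting

open scoped MatrixOrder

variable {n : ℕ} {W : Matrix (Fin n) (Fin n) ℝ}

section Substochastic

variable (hW : W.IsSymm) (hW₀ : ∀ i j, 0 ≤ W i j) (hW₁ : ∀ i, ∑ j, W i j ≤ 1)
include hW hW₀ hW₁

theorem one_sub_posSemidef : (1 - W).PosSemidef := by
  refine posSemidef_of_sum_erase_norm_le (by simp [IsHermitian, hW.eq]) fun i => ?_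
  have hoff : ∑ j ∈ Finset.univ.erase i, ‖(1 - W) i j‖ = ∑ j ∈ Finset.univ.erase i, W i j :=
    Finset.sum_congr rfl fun j hj => by
      simp [Matrix.one_apply_ne (Finset.ne_of_mem_erase hj).symm, abs_of_nonneg (hW₀ i j)]
  have hrow := Finset.add_sum_erase Finset.univ (W i) (Finset.mem_univ i)
  rw [hoff]
  simp only [Matrix.sub_apply, one_apply_eq, RCLike.re_to_real]
  linarith [hW₁ i]

theorem Bmat_posSemidef : (Bmat W).PosSemidef := by
  refine posSemidef_of_sum_erase_norm_le (by simp [IsHermitian, Bmat, hW.eq]) fun i => ?_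
  have hoff : ∑ j ∈ Finset.univ.erase i, ‖Bmat W i j‖ = ∑ j ∈ Finset.univ.erase i, W i j :=
    Finset.sum_congr rfl fun j hj => by
      have hij := (Finset.ne_of_mem_erase hj).symm
      simp [Bmat, Matrix.one_apply_ne hij, Matrix.diagonal_apply_ne _ hij, abs_of_nonneg (hW₀ i j)]
  have hrow := Finset.add_sum_erase Finset.univ (W i) (Finset.mem_univ i)
  rw [hoff]
  simp only [Bmat, Matrix.add_apply, Matrix.sub_apply, Matrix.smul_apply, one_apply_eq,
    diagonal_apply_eq, smul_eq_mul, RCLike.re_to_real]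
  linarith [hW₁ i]

end Substochastic

theorem Bmat_le_diagonal (hW : (1 - W).PosSemidef) :
    Bmat W ≤ diagonal fun i => 2 * (1 - W i i) := by
  have hsplit : (diagonal fun i => 2 * (1 - W i i)) - Bmat W = 1 - W := by
    ext i j
    rcases eq_or_ne i j with rfl | hij
    · simp [Bmat]
      ring
    · simp [Bmat, hij]
  rwa [Matrix.le_iff, hsplit]

variable {f : Fin n → ℝ → ℝ} {α : ℝ} {x : Fin n → ℝ}

theorem Hhatinv_eq (hd : ∀ i, 0 ≤ dEntry W f α x i) :
    Hhatinv W f α x = diagonal (dEntry W f α x)⁻¹ +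
      diagonal (dEntry W f α x)⁻¹ * Bmat W * diagonal (dEntry W f α x)⁻¹ := by
  have hsq : Dinvhalf W f α x * Dinvhalf W f α x = diagonal (dEntry W f α x)⁻¹ := by
    simp only [Dinvhalf, diagonal_mul_diagonal, ← mul_inv, Real.mul_self_sqrt (hd _)]
    rfl
  simp only [Hhatinv, ← hsq, mul_add, add_mul, mul_one, Matrix.mul_assoc]

theorem diagonal_inv_le_Hhatinv (hB : (Bmat W).PosSemidef) (hd : ∀ i, 0 ≤ dEntry W f α x i) :
    diagonal (dEntry W f α x)⁻¹ ≤ Hhatinv W f α x := by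
  rw [Hhatinv_eq hd]
  exact le_add_of_nonneg_right ((isHermitian_diagonal _).isSelfAdjoint.conjugate_nonneg hB.nonneg)

theorem Hhatinv_le_diagonal (hW : (1 - W).PosSemidef) (hd : ∀ i, 0 ≤ dEntry W f α x i) :
    Hhatinv W f α x ≤
      diagonal fun i => (dEntry W f α x i)⁻¹ * (1 + 2 * (1 - W i i) / dEntry W f α x i) := by
  have hconj := IsSelfAdjoint.conjugate_le_conjugate (Bmat_le_diagonal hW)
    (isHermitian_diagonal (dEntry W f α x)⁻¹).isSelfAdjoint
  rw [Hhatinv_eq hd]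
  refine (add_le_add_right hconj _).trans_eq ?_
  simp only [diagonal_mul_diagonal, diagonal_add]
  congr 1
  ext i
  simp only [Pi.inv_apply]
  ring

theorem inv_smul_one_le_Hhatinv {b : ℝ} (hB : (Bmat W).PosSemidef)
    (hd : ∀ i, 0 < dEntry W f α x i) (hdb : ∀ i, dEntry W f α x i ≤ b) :
    b⁻¹ • 1 ≤ Hhatinv W f α x := by
  rw [smul_one_eq_diagonal]
  exact (diagonal_mono fun i => inv_anti₀ (hd i) (hdb i)).trans
    (diagonal_inv_le_Hhatinv hB fun i => (hd i).le)

theorem Hhatinv_le_div_smul_one {a r : ℝ} (hW : (1 - W).PosSemidef) (ha : 0 < a)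
    (had : ∀ i, a ≤ dEntry W f α x i)
    (hdr : ∀ i, 2 * (1 - W i i) / dEntry W f α x i ≤ r) :
    Hhatinv W f α x ≤ ((1 + r) / a) • 1 := by
  have hd (i : Fin n) : 0 < dEntry W f α x i := ha.trans_le (had i)
  rw [smul_one_eq_diagonal]
  refine (Hhatinv_le_diagonal hW fun i => (hd i).le).trans (diagonal_mono fun i => ?_)
  have hdiag : 0 ≤ 1 - W i i := by simpa using hW.diag_nonneg (i := i)
  have hr : 0 ≤ r := (div_nonneg (mul_nonneg zero_le_two hdiag) (hd i).le).trans (hdr i)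
  calc (dEntry W f α x i)⁻¹ * (1 + 2 * (1 - W i i) / dEntry W f α x i)
      ≤ (dEntry W f α x i)⁻¹ * (1 + r) :=
        mul_le_mul_of_nonneg_left (by linarith [hdr i]) (inv_nonneg.mpr (hd i).le)
    _ ≤ a⁻¹ * (1 + r) := mul_le_mul_of_nonneg_right (inv_anti₀ ha (had i)) (by linarith)
    _ = (1 + r) / a := inv_mul_eq_div a (1 + r)

end Splitting

section Objective

variable {n : ℕ} {W : Matrix (Fin n) (Fin n) ℝ} {f : Fin n → ℝ → ℝ} {α : ℝ}

theorem Fobj_add (hW : (1 - W).IsSymm) (x v : Fin n → ℝ) :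
    Fobj W f α (x + v) = Fobj W f α x + gvec W f α x ⬝ᵥ v + 1 / 2 * (v ⬝ᵥ (1 - W) *ᵥ v) +
      α * ∑ i, (f i (x i + v i) - f i (x i) - deriv (f i) (x i) * v i) := by
  have hgrad : gvec W f α x ⬝ᵥ v =
      v ⬝ᵥ (1 - W) *ᵥ x + α * ∑ i, deriv (f i) (x i) * v i := by
    simp only [dotProduct, gvec, Finset.mul_sum, ← Finset.sum_add_distrib]
    exact Finset.sum_congr rfl fun i _ => by ring
  rw [hgrad]
  simp only [Fobj, mulVec_add, dotProduct_add, add_dotProduct, Pi.add_apply,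
    Finset.sum_sub_distrib, dotProduct_mulVec_comm hW x v]
  ring

section Curvature

variable (hα : 0 ≤ α) (hf : ∀ i, Differentiable ℝ (f i))
  (hf' : ∀ i, Differentiable ℝ (deriv (f i)))
include hα hf hf'

theorem le_Fobj_add {m : ℝ} (hW : (1 - W).PosSemidef) (hm : ∀ i s, m ≤ d2 f i s)
    (x v : Fin n → ℝ) :
    Fobj W f α x + gvec W f α x ⬝ᵥ v + α * m / 2 * (v ⬝ᵥ v) ≤ Fobj W f α (x + v) := by
  have hquad : 0 ≤ v ⬝ᵥ (1 - W) *ᵥ v := by simpa using hW.dotProduct_mulVec_nonneg v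
  have hsum : m / 2 * (v ⬝ᵥ v) ≤ ∑ i, (f i (x i + v i) - f i (x i) - deriv (f i) (x i) * v i) := by
    rw [dotProduct, Finset.mul_sum]
    exact Finset.sum_le_sum fun i _ => by
      linarith [add_deriv_mul_add_sq_le_of_le_deriv2 (hf i) (hf' i) (hm i) (x i) (v i)]
  rw [Fobj_add hW.isHermitian]
  linarith [mul_le_mul_of_nonneg_left hsum hα]

theorem Fobj_add_le {M : ℝ} (hW : (1 - W).IsSymm) (hM : ∀ i s, d2 f i s ≤ M) (x v : Fin n → ℝ) :
    Fobj W f α (x + v) ≤ Fobj W f α x + gvec W f α x ⬝ᵥ v + 1 / 2 * (v ⬝ᵥ (1 - W) *ᵥ v) +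
      α * M / 2 * (v ⬝ᵥ v) := by
  have hsum : ∑ i, (f i (x i + v i) - f i (x i) - deriv (f i) (x i) * v i) ≤ M / 2 * (v ⬝ᵥ v) := by
    rw [dotProduct, Finset.mul_sum]
    exact Finset.sum_le_sum fun i _ => by
      linarith [le_add_deriv_mul_add_sq_of_deriv2_le (hf i) (hf' i) (hM i) (x i) (v i)]
  rw [Fobj_add hW]
  linarith [mul_le_mul_of_nonneg_left hsum hα]

theorem Fobj_update_le {M K : ℝ} (hW : (1 - W).IsSymm) (hM : ∀ i s, d2 f i s ≤ M)
    (hK : ∀ i, 1 - W i i + α * M ≤ K) (x : Fin n → ℝ) (i : Fin n) (h : ℝ) :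
    Fobj W f α (Function.update x i (x i - h)) ≤
      Fobj W f α x - h * gvec W f α x i + K / 2 * h ^ 2 := by
  have hupdate : Function.update x i (x i - h) = x + Pi.single i (-h) := by
    ext j
    rcases eq_or_ne j i with rfl | hj
    · simp [sub_eq_add_neg]
    · simp [hj]
  have hbound := Fobj_add_le hα hf hf' hW hM x (Pi.single i (-h))
  simp only [dotProduct_single, single_dotProduct, mulVec_single, Pi.smul_apply, col_apply,
    Matrix.sub_apply, one_apply_eq, Pi.single_eq_same, MulOpposite.smul_eq_mul_unop,
    MulOpposite.unop_op] at hbound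
  rw [hupdate]
  linarith [mul_le_mul_of_nonneg_right (hK i) (sq_nonneg h)]

theorem gvec_eq_zero_of_isMin {M K : ℝ} (hW : (1 - W).IsSymm) (hM : ∀ i s, d2 f i s ≤ M)
    (hK₀ : 0 < K) (hK : ∀ i, 1 - W i i + α * M ≤ K) {xstar : Fin n → ℝ}
    (hmin : ∀ y, Fobj W f α xstar ≤ Fobj W f α y) : gvec W f α xstar = 0 := by
  ext i
  have hdecrease := (hmin _).trans
    (Fobj_update_le hα hf hf' hW hM hK xstar i (gvec W f α xstar i / K))
  have hgap : gvec W f α xstar i / K * gvec W f α xstar i -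
      K / 2 * (gvec W f α xstar i / K) ^ 2 = gvec W f α xstar i ^ 2 / (2 * K) := by
    field_simp
    ring
  have hsq : gvec W f α xstar i ^ 2 / (2 * K) ≤ 0 := by linarith
  rw [div_le_iff₀ (by positivity), zero_mul] at hsq
  exact pow_eq_zero_iff two_ne_zero |>.mp (hsq.antisymm (sq_nonneg _))

theorem two_mul_Fobj_sub_le_gvec_dotProduct {m : ℝ} (hm₀ : 0 ≤ m) (hW : (1 - W).PosSemidef)
    (hm : ∀ i s, m ≤ d2 f i s) (x y : Fin n → ℝ) :
    2 * (α * m) * (Fobj W f α x - Fobj W f α y) ≤ gvec W f α x ⬝ᵥ gvec W f α x := by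
  have hlower := le_Fobj_add hα hf hf' hW hm x (y - x)
  rw [add_sub_cancel] at hlower
  have hsquare := dotProduct_star_self_nonneg (gvec W f α x + (α * m) • (y - x))
  simp only [star_trivial, add_dotProduct, dotProduct_add, smul_dotProduct, dotProduct_smul,
    smul_eq_mul, dotProduct_comm (y - x) (gvec W f α x)] at hsquare
  linarith [mul_le_mul_of_nonneg_left hlower (mul_nonneg hα hm₀)]

theorem enorm_sub_le_sqrt_Fobj_sub {m : ℝ} (hαm : 0 < α * m) (hW : (1 - W).PosSemidef)
    (hm : ∀ i s, m ≤ d2 f i s) {xstar : Fin n → ℝ} (hg : gvec W f α xstar = 0) (x : Fin n → ℝ) :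
    _root_.enorm (x - xstar) ≤ √(2 / (α * m) * (Fobj W f α x - Fobj W f α xstar)) := by
  have hlower := le_Fobj_add hα hf hf' hW hm xstar (x - xstar)
  rw [add_sub_cancel, hg, zero_dotProduct] at hlower
  have hsq : ∑ i, (x - xstar) i ^ 2 = (x - xstar) ⬝ᵥ (x - xstar) := by simp only [dotProduct, sq]
  rw [_root_.enorm, hsq]
  refine Real.sqrt_le_sqrt ?_
  rw [div_mul_eq_mul_div, le_div_iff₀ hαm]
  linarith

end Curvature

end Objective

section RandomCoordinateDescent

variable {ι : Type*} [Fintype ι] [DecidableEq ι] {F : (ι → ℝ) → ℝ} {g d x p : ι → ℝ}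
  {K ε pmin : ℝ} (hK : 0 ≤ K) (hpmin : 0 < pmin) (hp : ∀ i, pmin ≤ p i) (hpsum : ∑ i, p i = 1)
  (hF : ∀ i h, F (Function.update x i (x i - h)) ≤ F x - h * g i + K / 2 * h ^ 2)
include hK hpmin hp hpsum hF

-- The stepsizes `ε / p i` make the expected displacement equal to `-ε • d`.
theorem sum_mul_update_le :
    ∑ i, p i * F (Function.update x i (x i - ε / p i * d i)) ≤
      F x - ε * (g ⬝ᵥ d) + K * ε ^ 2 / (2 * pmin) * (d ⬝ᵥ d) := by
  have hterm (i : ι) : p i * F (Function.update x i (x i - ε / p i * d i)) ≤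
      p i * F x - ε * (g i * d i) + K * ε ^ 2 / (2 * pmin) * (d i * d i) := by
    have hpi : 0 < p i := hpmin.trans_le (hp i)
    calc p i * F (Function.update x i (x i - ε / p i * d i))
        ≤ p i * (F x - ε / p i * d i * g i + K / 2 * (ε / p i * d i) ^ 2) :=
          mul_le_mul_of_nonneg_left (hF i _) hpi.le
      _ = p i * F x - ε * (g i * d i) + K * ε ^ 2 / (2 * p i) * (d i * d i) := by
          field_simp
      _ ≤ p i * F x - ε * (g i * d i) + K * ε ^ 2 / (2 * pmin) * (d i * d i) := by
          have := hp i
          have := mul_self_nonneg (d i)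
          gcongr
  calc ∑ i, p i * F (Function.update x i (x i - ε / p i * d i))
      ≤ ∑ i, (p i * F x - ε * (g i * d i) + K * ε ^ 2 / (2 * pmin) * (d i * d i)) :=
        Finset.sum_le_sum fun i _ => hterm i
    _ = F x - ε * (g ⬝ᵥ d) + K * ε ^ 2 / (2 * pmin) * (d ⬝ᵥ d) := by
        rw [Finset.sum_add_distrib, Finset.sum_sub_distrib, ← Finset.sum_mul, ← Finset.mul_sum,
          ← Finset.mul_sum, hpsum, one_mul]
        rfl

theorem sum_mul_update_sub_le {c lam Lam Fmin : ℝ} (hε : 0 ≤ ε)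
    (hstep : 0 ≤ ε * lam - K * ε ^ 2 / (2 * pmin) * Lam ^ 2)
    (hgd : lam * (g ⬝ᵥ g) ≤ g ⬝ᵥ d) (hdd : d ⬝ᵥ d ≤ Lam ^ 2 * (g ⬝ᵥ g))
    (hPL : 2 * c * (F x - Fmin) ≤ g ⬝ᵥ g) :
    ∑ i, p i * (F (Function.update x i (x i - ε / p i * d i)) - Fmin) ≤
      (1 - 2 * c * (ε * lam - K * ε ^ 2 / (2 * pmin) * Lam ^ 2)) * (F x - Fmin) := by
  have hdescent : ∑ i, p i * F (Function.update x i (x i - ε / p i * d i)) ≤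
      F x - (ε * lam - K * ε ^ 2 / (2 * pmin) * Lam ^ 2) * (g ⬝ᵥ g) := by
    have hlinear := mul_le_mul_of_nonneg_left hgd hε
    have hquad := mul_le_mul_of_nonneg_left hdd (by positivity : 0 ≤ K * ε ^ 2 / (2 * pmin))
    linarith [sum_mul_update_le (ε := ε) (d := d) hK hpmin hp hpsum hF]
  simp only [mul_sub, Finset.sum_sub_distrib, ← Finset.sum_mul, hpsum, one_mul]
  linarith [mul_le_mul_of_nonneg_left hPL hstep]

end RandomCoordinateDescent

section NetworkNewton

open scoped MatrixOrder

variable {n : ℕ} {W : Matrix (Fin n) (Fin n) ℝ} {f : Fin n → ℝ → ℝ} {α δ Δ m M : ℝ}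
  (hδ : ∀ i, δ ≤ W i i) (hΔ : ∀ i, W i i ≤ Δ) (hΔ₁ : Δ ≤ 1)
  (hm : ∀ i s, m ≤ d2 f i s) (hM : ∀ i s, d2 f i s ≤ M) (hm₀ : 0 < m) (hα : 0 < α)

include hδ hM hα in
theorem dEntry_le (x : Fin n → ℝ) (i : Fin n) : dEntry W f α x i ≤ 2 * (1 - δ) + α * M := by
  unfold dEntry
  linarith [mul_le_mul_of_nonneg_left (hM i (x i)) hα.le, hδ i]

include hΔ hm hα in
theorem le_dEntry (x : Fin n → ℝ) (i : Fin n) : 2 * (1 - Δ) + α * m ≤ dEntry W f α x i := by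
  unfold dEntry
  linarith [mul_le_mul_of_nonneg_left (hm i (x i)) hα.le, hΔ i]

include hδ hΔ hΔ₁ hm hm₀ hα in
theorem two_mul_one_sub_div_dEntry_le (x : Fin n → ℝ) (i : Fin n) :
    2 * (1 - W i i) / dEntry W f α x i ≤ 2 * (1 - δ) / (2 * (1 - δ) + α * m) := by
  have hself : 0 ≤ 1 - W i i := by linarith [hΔ i]
  have hself_le : 1 - W i i ≤ 1 - δ := by linarith [hδ i]
  have hcurv : α * m ≤ α * d2 f i (x i) := mul_le_mul_of_nonneg_left (hm i (x i)) hα.le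
  have hαm : 0 < α * m := mul_pos hα hm₀
  rw [dEntry, div_le_div_iff₀ (by linarith) (by linarith)]
  linarith [mul_le_mul hself_le hcurv hαm.le (by linarith)]

include hδ hΔ hΔ₁ hm hM hm₀ hα in
theorem one_div_smul_one_le_Hhatinv (hB : (Bmat W).PosSemidef) (x : Fin n → ℝ) :
    (1 / (2 * (1 - δ) + α * M)) • 1 ≤ Hhatinv W f α x := by
  have ha : 0 < 2 * (1 - Δ) + α * m := by linarith [mul_pos hα hm₀]
  rw [one_div]
  exact inv_smul_one_le_Hhatinv hB (fun i => ha.trans_le (le_dEntry hΔ hm hα x i))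
    (dEntry_le hδ hM hα x)

include hδ hΔ hΔ₁ hm hm₀ hα in
theorem Hhatinv_le_one_add_div_smul_one (hW : (1 - W).PosSemidef) (x : Fin n → ℝ) :
    Hhatinv W f α x ≤
      ((1 + 2 * (1 - δ) / (2 * (1 - δ) + α * m)) / (2 * (1 - Δ) + α * m)) • 1 :=
  Hhatinv_le_div_smul_one hW (by linarith [mul_pos hα hm₀]) (le_dEntry hΔ hm hα x)
    (two_mul_one_sub_div_dEntry_le hδ hΔ hΔ₁ hm hm₀ hα x)

include hm hM hm₀ hα in
theorem sum_Fobj_upd_sub_le {lam Lam pmin ε : ℝ} {p : Fin n → ℝ} (hW : (1 - W).PosSemidef)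
    (hf : ∀ i, Differentiable ℝ (f i)) (hf' : ∀ i, Differentiable ℝ (deriv (f i))) (hlam : 0 < lam)
    (hLam : 0 < Lam) (hK : ∀ i, 1 - W i i + α * M ≤ lam⁻¹)
    {x : Fin n → ℝ} (hlo : lam • 1 ≤ Hhatinv W f α x) (hhi : Hhatinv W f α x ≤ Lam • 1)
    (hpmin : 0 < pmin) (hp : ∀ i, pmin ≤ p i) (hpsum : ∑ i, p i = 1) (hε : 0 ≤ ε)
    (hε_le : ε ≤ 2 * pmin * (lam / Lam) ^ 2) (y : Fin n → ℝ) :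
    ∑ i, p i * (Fobj W f α (upd W f α p ε x i) - Fobj W f α y) ≤
      (1 - α * m * ε * (2 * pmin * lam ^ 2 - ε * Lam ^ 2) / (lam * pmin)) *
        (Fobj W f α x - Fobj W f α y) := by
  set g := gvec W f α x
  have hnonneg : 0 ≤ Hhatinv W f α x := (smul_nonneg hlam.le zero_le_one).trans hlo
  have hgd : lam * (g ⬝ᵥ g) ≤ g ⬝ᵥ Hhatinv W f α x *ᵥ g :=
    (dotProduct_smul_one_mulVec lam g).symm.trans_le (dotProduct_mulVec_le_of_le hlo g)
  have hdd := mulVec_dotProduct_mulVec_le hLam hnonneg hhi g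
  have hfactor : ε * lam - lam⁻¹ * ε ^ 2 / (2 * pmin) * Lam ^ 2 =
      ε * (2 * pmin * lam ^ 2 - ε * Lam ^ 2) / (2 * (lam * pmin)) := by
    field_simp
  have hstep : 0 ≤ ε * lam - lam⁻¹ * ε ^ 2 / (2 * pmin) * Lam ^ 2 := by
    have hgap : ε * Lam ^ 2 ≤ 2 * pmin * lam ^ 2 := by
      rwa [div_pow, ← mul_div_assoc, le_div_iff₀ (by positivity)] at hε_le
    rw [hfactor]
    exact div_nonneg (mul_nonneg hε (sub_nonneg.mpr hgap)) (by positivity)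
  have hcontract := sum_mul_update_sub_le (inv_pos.mpr hlam).le hpmin hp hpsum
    (Fobj_update_le hα.le hf hf' hW.isHermitian hM hK x) hε hstep hgd hdd
    (two_mul_Fobj_sub_le_gvec_dotProduct hα.le hf hf' hm₀.le hW hm x y)
  refine hcontract.trans_eq ?_
  rw [hfactor]
  field_simp

end NetworkNewton

section RandomRecursion

open MeasureTheory ProbabilityTheory

variable {Ω κ G : Type*} [MeasurableSpace Ω] {μ : Measure Ω} [MeasurableSpace κ]
  [MeasurableSingletonClass κ] [NormedAddCommGroup G]

theorem integrable_comp_of_finite [IsFiniteMeasure μ] [Finite κ] {Z : Ω → κ} (hZ : Measurable Z)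
    (φ : κ → G) : Integrable (fun ω => φ (Z ω)) μ :=
  (Integrable.of_finite (μ := μ.map Z) (f := φ)).comp_measurable hZ

theorem integral_comp_eq_integral_sum [NormedSpace ℝ G] [CompleteSpace G] [IsFiniteMeasure μ]
    [Fintype κ] {η : Type*} [MeasurableSpace η] [Finite η] [MeasurableSingletonClass η] {Z : Ω → η}
    {J : Ω → κ} (hZ : Measurable Z) (hJ : Measurable J) (hZJ : IndepFun Z J μ)
    (φ : η → κ → G) :
    ∫ ω, φ (Z ω) (J ω) ∂μ = ∫ ω, ∑ i, μ.real (J ⁻¹' {i}) • φ (Z ω) i ∂μ := by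
  have hlaw := (indepFun_iff_map_prod_eq_prod_map_map hZ.aemeasurable hJ.aemeasurable).mp hZJ
  calc ∫ ω, φ (Z ω) (J ω) ∂μ
      = ∫ z, φ z.1 z.2 ∂(μ.map Z).prod (μ.map J) := by
        rw [← hlaw, integral_map (hZ.prodMk hJ).aemeasurable
          Integrable.of_finite.aestronglyMeasurable]
    _ = ∫ z, ∫ i, φ z i ∂μ.map J ∂μ.map Z := integral_prod _ .of_finite
    _ = ∫ z, ∑ i, μ.real (J ⁻¹' {i}) • φ z i ∂μ.map Z := by
        simp only [integral_fintype .of_finite,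
          map_measureReal_apply hJ (measurableSet_singleton _)]
    _ = ∫ ω, ∑ i, μ.real (J ⁻¹' {i}) • φ (Z ω) i ∂μ :=
        integral_map hZ.aemeasurable Integrable.of_finite.aestronglyMeasurable

variable {E : Type*} {U : E → κ → E} {x0 : E} {I : ℕ → Ω → κ} {X : ℕ → Ω → E}
  (hX₀ : ∀ ω, X 0 ω = x0) (hX : ∀ t ω, X (t + 1) ω = U (X t ω) (I (t + 1) ω))
include hX₀ hX

omit [MeasurableSpace Ω] [MeasurableSpace κ] [MeasurableSingletonClass κ] in
theorem exists_eq_comp_history (t : ℕ) :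
    ∃ Φ : (Finset.Iic t → κ) → E, ∀ ω, X t ω = Φ fun s => I s ω := by
  induction t with
  | zero => exact ⟨fun _ => x0, hX₀⟩
  | succ t ih =>
    obtain ⟨Φ, hΦ⟩ := ih
    have hsub : Finset.Iic t ⊆ Finset.Iic (t + 1) := Finset.Iic_subset_Iic.mpr t.le_succ
    refine ⟨fun h => U (Φ fun s => h ⟨s, hsub s.2⟩) (h ⟨t + 1, Finset.mem_Iic.mpr le_rfl⟩),
      fun ω => ?_⟩
    rw [hX, hΦ]

variable (hI : ∀ t, Measurable (I t))
include hI

theorem integrable_comp_recursion [IsFiniteMeasure μ] [Finite κ] (V : E → G) (t : ℕ) :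
    Integrable (fun ω => V (X t ω)) μ := by
  obtain ⟨Φ, hΦ⟩ := exists_eq_comp_history hX₀ hX t
  simp only [hΦ]
  exact integrable_comp_of_finite (measurable_pi_lambda _ fun s : Finset.Iic t => hI s) (V ∘ Φ)

variable [Fintype κ] (hindep : iIndepFun I μ)
include hindep

theorem integral_comp_recursion_succ [NormedSpace ℝ G] [CompleteSpace G] [IsFiniteMeasure μ]
    (V : E → G) (t : ℕ) :
    ∫ ω, V (X (t + 1) ω) ∂μ =
      ∫ ω, ∑ i, μ.real (I (t + 1) ⁻¹' {i}) • V (U (X t ω) i) ∂μ := by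
  obtain ⟨Φ, hΦ⟩ := exists_eq_comp_history hX₀ hX t
  let next : ({t + 1} : Finset ℕ) := ⟨t + 1, Finset.mem_singleton_self _⟩
  have hhistory : IndepFun (fun ω (s : Finset.Iic t) => I s ω) (I (t + 1)) μ :=
    (hindep.indepFun_finset (Finset.Iic t) {t + 1} (by simp) hI).comp measurable_id
      (measurable_pi_apply next)
  simp only [hX, hΦ]
  exact integral_comp_eq_integral_sum (measurable_pi_lambda _ fun s : Finset.Iic t => hI s)
    (hI (t + 1)) hhistory fun h i => V (U (Φ h) i)

theorem integral_comp_recursion_le [IsProbabilityMeasure μ] {p : κ → ℝ}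
    (hlaw : ∀ t i, μ.real (I t ⁻¹' {i}) = p i) {c : ℝ} (hc : 0 ≤ c) {V : E → ℝ}
    (hV : ∀ x, ∑ i, p i * V (U x i) ≤ c * V x) (t : ℕ) :
    ∫ ω, V (X t ω) ∂μ ≤ c ^ t * V x0 := by
  induction t with
  | zero => simp [hX₀]
  | succ t ih =>
    have hintegrable (φ : E → ℝ) := integrable_comp_recursion (μ := μ) hX₀ hX hI φ t
    calc ∫ ω, V (X (t + 1) ω) ∂μ
        = ∫ ω, ∑ i, p i * V (U (X t ω) i) ∂μ := by
          simp only [integral_comp_recursion_succ hX₀ hX hI hindep V t, hlaw, smul_eq_mul]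
      _ ≤ ∫ ω, c * V (X t ω) ∂μ :=
          integral_mono (hintegrable fun x => ∑ i, p i * V (U x i)) (hintegrable fun x => c * V x)
            fun ω => hV (X t ω)
      _ = c * ∫ ω, V (X t ω) ∂μ := integral_const_mul c _
      _ ≤ c * (c ^ t * V x0) := mul_le_mul_of_nonneg_left ih hc
      _ = c ^ (t + 1) * V x0 := by ring

theorem integral_comp_recursion_le_sqrt [IsProbabilityMeasure μ] {p : κ → ℝ}
    (hlaw : ∀ t i, μ.real (I t ⁻¹' {i}) = p i) {b c : ℝ} {V N : E → ℝ} (hb : 0 ≤ b)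
    (hV₀ : ∀ x, 0 ≤ V x) (hN : ∀ x, N x ≤ √(b * V x))
    (hV : ∀ x, ∑ i, p i * V (U x i) ≤ c * V x) (t : ℕ) :
    ∫ ω, N (X t ω) ∂μ ≤ √(b * V x0) * √c ^ t := by
  have hintegrable (φ : E → ℝ) := integrable_comp_recursion (μ := μ) hX₀ hX hI φ t
  have hdrift (x : E) : ∑ i, p i * V (U x i) ≤ √c ^ 2 * V x := by
    rw [Real.sq_sqrt']
    exact (hV x).trans (mul_le_mul_of_nonneg_right (le_max_left c 0) (hV₀ x))
  calc ∫ ω, N (X t ω) ∂μ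
      ≤ ∫ ω, √(b * V (X t ω)) ∂μ :=
        integral_mono (hintegrable N) (hintegrable fun x => √(b * V x)) fun ω => hN (X t ω)
    _ ≤ √(∫ ω, b * V (X t ω) ∂μ) :=
        Real.strictConcaveOn_sqrt.concaveOn.le_map_integral Real.continuous_sqrt.continuousOn
          isClosed_Ici (ae_of_all μ fun ω => mul_nonneg hb (hV₀ (X t ω)))
          (hintegrable fun x => b * V x) (hintegrable fun x => √(b * V x))
    _ ≤ √(b * ((√c ^ 2) ^ t * V x0)) := by
        rw [integral_const_mul]
        exact Real.sqrt_le_sqrt (mul_le_mul_of_nonneg_left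
          (integral_comp_recursion_le hX₀ hX hI hindep hlaw (sq_nonneg √c) hdrift t) hb)
    _ = √(b * V x0) * √c ^ t := by
        rw [← pow_mul, mul_comm 2, pow_mul, mul_left_comm, mul_comm,
          Real.sqrt_mul (mul_nonneg hb (hV₀ x0)), Real.sqrt_sq (by positivity)]

end RandomRecursion

section Convergence

open MeasureTheory ProbabilityTheory
open scoped MatrixOrder

theorem integral_enorm_sub_le {n : ℕ} {W : Matrix (Fin n) (Fin n) ℝ} {f : Fin n → ℝ → ℝ}
    {α m M lam Lam pmin ε : ℝ} {p : Fin n → ℝ} (hm : ∀ i s, m ≤ d2 f i s)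
    (hM : ∀ i s, d2 f i s ≤ M) (hm₀ : 0 < m) (hα : 0 < α) (hW : (1 - W).PosSemidef)
    (hf : ∀ i, Differentiable ℝ (f i)) (hf' : ∀ i, Differentiable ℝ (deriv (f i)))
    (hlam : 0 < lam) (hLam : 0 < Lam) (hK : ∀ i, 1 - W i i + α * M ≤ lam⁻¹)
    (hlo : ∀ x, lam • 1 ≤ Hhatinv W f α x) (hhi : ∀ x, Hhatinv W f α x ≤ Lam • 1)
    (hpmin : 0 < pmin) (hp : ∀ i, pmin ≤ p i) (hpsum : ∑ i, p i = 1) (hε : 0 ≤ ε)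
    (hε_le : ε ≤ 2 * pmin * (lam / Lam) ^ 2) {xstar : Fin n → ℝ}
    (hmin : ∀ y, Fobj W f α xstar ≤ Fobj W f α y)
    {Ω : Type*} [MeasurableSpace Ω] {μ : Measure Ω} [IsProbabilityMeasure μ] {I : ℕ → Ω → Fin n}
    (hI : ∀ t, Measurable (I t)) (hindep : iIndepFun I μ)
    (hlaw : ∀ t i, μ {ω | I t ω = i} = ENNReal.ofReal (p i))
    {x0 : Fin n → ℝ} {X : ℕ → Ω → Fin n → ℝ} (hX₀ : ∀ ω, X 0 ω = x0)
    (hX : ∀ t ω, X (t + 1) ω = upd W f α p ε (X t ω) (I (t + 1) ω)) (t : ℕ) :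
    ∫ ω, _root_.enorm (X t ω - xstar) ∂μ ≤
      √(2 / (α * m) * (Fobj W f α x0 - Fobj W f α xstar)) *
        √(1 - α * m * ε * (2 * pmin * lam ^ 2 - ε * Lam ^ 2) / (lam * pmin)) ^ t := by
  have hαm : 0 < α * m := mul_pos hα hm₀
  have hreal (t : ℕ) (i : Fin n) : μ.real (I t ⁻¹' {i}) = p i :=
    (congrArg ENNReal.toReal (hlaw t i)).trans (ENNReal.toReal_ofReal (hpmin.le.trans (hp i)))
  have hstationary : gvec W f α xstar = 0 :=
    gvec_eq_zero_of_isMin hα.le hf hf' hW.isHermitian hM (inv_pos.mpr hlam) hK hmin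
  have hgrowth := enorm_sub_le_sqrt_Fobj_sub hα.le hf hf' hαm hW hm hstationary
  have hcontract (x : Fin n → ℝ) := sum_Fobj_upd_sub_le hm hM hm₀ hα hW hf hf' hlam hLam hK
    (hlo x) (hhi x) hpmin hp hpsum hε hε_le xstar
  exact integral_comp_recursion_le_sqrt hX₀ hX hI hindep hreal (by positivity)
    (fun x => sub_nonneg.mpr (hmin x)) hgrowth hcontract t

end Convergence

theorem stmt10_general (n : ℕ) (W : Matrix (Fin n) (Fin n) ℝ) (hW : (1 - W).PosSemidef)
    (hB : (Bmat W).PosSemidef) (δ Δ : ℝ) (hΔ : Δ ≤ 1) (hWdiag : ∀ i, δ ≤ W i i ∧ W i i ≤ Δ)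
    (f : Fin n → ℝ → ℝ) (hf : ∀ i, Differentiable ℝ (f i))
    (hf' : ∀ i, Differentiable ℝ (deriv (f i))) (m M : ℝ) (hm : 0 < m)
    (hd2 : ∀ i s, m ≤ d2 f i s ∧ d2 f i s ≤ M) (α : ℝ) (hα : 0 < α)
    (p : Fin n → ℝ) (pmin : ℝ) (hpmin : 0 < pmin) (hp : ∀ i, pmin ≤ p i) (hpsum : ∑ i, p i = 1)
    (xstar : Fin n → ℝ) (hmin : ∀ y, Fobj W f α xstar ≤ Fobj W f α y)
    (ρ lam Lam : ℝ) (hρ : ρ = 2 * (1 - δ) / (2 * (1 - δ) + α * m))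
    (hlam : lam = 1 / (2 * (1 - δ) + α * M)) (hLam : Lam = (1 + ρ) / (2 * (1 - Δ) + α * m))
    (ε : ℝ) (hε : 0 ≤ ε) (hε_le : ε ≤ 2 * pmin * (lam / Lam) ^ 2)
    (β : ℝ) (hβ : β = α * m * ε * (2 * pmin * lam ^ 2 - ε * Lam ^ 2) / (lam * pmin))
    (Ω : Type*) [MeasurableSpace Ω] (μ : MeasureTheory.Measure Ω)
    [MeasureTheory.IsProbabilityMeasure μ]
    (I : ℕ → Ω → Fin n) (hImeas : ∀ t, Measurable (I t))
    (hIindep : ProbabilityTheory.iIndepFun I μ)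
    (hIdist : ∀ t i, μ {ω | I t ω = i} = ENNReal.ofReal (p i))
    (x0 : Fin n → ℝ) (X : ℕ → Ω → Fin n → ℝ) (hX0 : ∀ ω, X 0 ω = x0)
    (hXsucc : ∀ (t : ℕ) (ω : Ω), X (t + 1) ω = upd W f α p ε (X t ω) (I (t + 1) ω)) (t : ℕ) :
    ∫ ω, _root_.enorm (X t ω - xstar) ∂μ ≤
      √(2 * (Fobj W f α x0 - Fobj W f α xstar) / (α * m)) * √(1 - β) ^ t := by
  subst hρ hlam hLam hβ
  obtain ⟨hδ, hΔW⟩ := forall_and.mp hWdiag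
  have hm₂ (i : Fin n) : ∀ s, m ≤ d2 f i s := fun s => (hd2 i s).1
  have hM₂ (i : Fin n) : ∀ s, d2 f i s ≤ M := fun s => (hd2 i s).2
  obtain ⟨k, -⟩ : (Finset.univ : Finset (Fin n)).Nonempty :=
    Finset.nonempty_of_sum_ne_zero (hpsum.trans_ne one_ne_zero)
  have hδ₁ : 0 ≤ 1 - δ := by linarith [hδ k, hΔW k]
  have hαm : 0 < α * m := mul_pos hα hm
  have hαM : α * m ≤ α * M := mul_le_mul_of_nonneg_left ((hm₂ k 0).trans (hM₂ k 0)) hα.le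
  have hupper : 0 < 2 * (1 - δ) + α * M := by linarith
  have hlower : 0 < 2 * (1 - Δ) + α * m := by linarith
  rw [mul_div_right_comm]
  exact integral_enorm_sub_le hm₂ hM₂ hm hα hW hf hf' (one_div_pos.mpr hupper)
    (div_pos (by positivity) hlower)
    (fun i => by rw [one_div, inv_inv]; linarith [hδ i])
    (one_div_smul_one_le_Hhatinv hδ hΔW hΔ hm₂ hM₂ hm hα hB)
    (Hhatinv_le_one_add_div_smul_one hδ hΔW hΔ hm₂ hm hα hW)
    hpmin hp hpsum hε hε_le hmin hImeas hIindep hIdist hX0 hXsucc t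

/-- Global linear convergence in expectation of the iterates:
`E[‖x(t) − x*‖] ≤ (2(F(x(0)) − F*)/(αm))^{1/2} ((1 − β)^{1/2})^t`. -/
theorem stmt10 (n : ℕ) (hn : 1 ≤ n)
    (W : Matrix (Fin n) (Fin n) ℝ) (hWsymm : W.IsSymm)
    (hWnonneg : ∀ i j, 0 ≤ W i j) (hWlt : ∀ i j, W i j < 1)
    (hWone : W.mulVec (fun _ => 1) = fun _ => 1)
    (hWnull : ∀ x : Fin n → ℝ, ((1 - W).mulVec x = 0 ↔ ∃ c : ℝ, x = fun _ => c))
    (δ Δ : ℝ) (hδ : 0 < δ) (hδΔ : δ ≤ Δ) (hΔ : Δ < 1)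
    (hWdiag : ∀ i, δ ≤ W i i ∧ W i i ≤ Δ)
    (f : Fin n → ℝ → ℝ) (hf : ∀ i, ContDiff ℝ 2 (f i))
    (hconv : ∀ i, ConvexOn ℝ Set.univ (f i))
    (m M : ℝ) (hm : 0 < m) (hmM : m ≤ M)
    (hd2 : ∀ i s, m ≤ d2 f i s ∧ d2 f i s ≤ M)
    (α : ℝ) (hα : 0 < α)
    (p : Fin n → ℝ) (pmin pmax : ℝ) (hpmin : 0 < pmin) (hpmax : pmax < 1)
    (hp : ∀ i, pmin ≤ p i ∧ p i ≤ pmax) (hpsum : ∑ i, p i = 1)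
    (xstar : Fin n → ℝ) (hmin : ∀ y, Fobj W f α xstar ≤ Fobj W f α y)
    (ρ lam Lam : ℝ) (hρ : ρ = 2 * (1 - δ) / (2 * (1 - δ) + α * m))
    (hlam : lam = 1 / (2 * (1 - δ) + α * M))
    (hLam : Lam = (1 + ρ) / (2 * (1 - Δ) + α * m))
    (ε : ℝ) (hε : 0 < ε) (hεlt : ε < min (1 / 2) (2 * pmin * (lam / Lam) ^ 2))
    (β : ℝ) (hβ : β = α * m * ε * (2 * pmin * lam ^ 2 - ε * Lam ^ 2) / (lam * pmin))
    (Ω : Type*) [MeasurableSpace Ω] (μ : MeasureTheory.Measure Ω)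
    [MeasureTheory.IsProbabilityMeasure μ]
    (I : ℕ → Ω → Fin n) (hImeas : ∀ t, Measurable (I t))
    (hIindep : ProbabilityTheory.iIndepFun I μ)
    (hIdist : ∀ t i, μ {ω | I t ω = i} = ENNReal.ofReal (p i))
    (x0 : Fin n → ℝ) (X : ℕ → Ω → Fin n → ℝ)
    (hX0 : ∀ ω, X 0 ω = x0)
    (hXsucc : ∀ (t : ℕ) (ω : Ω), X (t + 1) ω = upd W f α p ε (X t ω) (I (t + 1) ω))
    : ∀ t : ℕ,
      ∫ ω, _root_.enorm (X t ω - xstar) ∂μ ≤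
        Real.sqrt (2 * (Fobj W f α x0 - Fobj W f α xstar) / (α * m)) *
          Real.sqrt (1 - β) ^ t := by
  have hrow (i : Fin n) : ∑ j, W i j ≤ 1 := by
    simpa [mulVec, dotProduct] using (congrFun hWone i).le
  exact stmt10_general n W (one_sub_posSemidef hWsymm hWnonneg hrow)
    (Bmat_posSemidef hWsymm hWnonneg hrow) δ Δ hΔ.le hWdiag f
    (fun i => (hf i).differentiable two_ne_zero)
    (fun i => (hf i).differentiable_deriv_two) m M hm hd2 α hα p pmin hpmin
    (fun i => (hp i).1) hpsum xstar hmin ρ lam Lam hρ hlam hLam ε hε.le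
    (hεlt.trans_le (min_le_right _ _)).le β hβ Ω μ I hImeas hIindep hIdist x0 X hX0 hXsucc
end
end

section
/- Suppose each f_i'' is L-Lipschitz and the stepsize parameter ε > 0 is given. Let x ∈ ℝⁿ, let i be any index, and let x⁺ = x^(i) be the asynchronous update of x by agent i. Then for every y ∈ ℝⁿ: ‖D(x⁺)^{1/2} y‖ ≤ (1 + C₂‖g(x)‖^{1/2}) ‖D(x)^{1/2} y‖, where C₂ = (εαLΛ/(π(2(1−Δ)+αm)))^{1/2} and ‖·‖ is the Euclidean norm. -/
open Matrix BigOperators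

noncomputable section

/-- Euclidean norm on `ℝⁿ`. -/
def eucNorm {n : ℕ} (v : Fin n → ℝ) : ℝ := Real.sqrt (∑ i, v i ^ 2)

/-!
The norm in the claim only sees the diagonal entries `D(x)_jj = α f_j''(x_j) + 2(1 − W_jj)`, and
the update changes a single one of them, by at most `α L` times the length of the step. That length
is at most `(ε/π) ‖Ĥ(x)⁻¹‖ ‖g(x)‖`, and `‖Ĥ(x)⁻¹‖ ≤ Λ` because the Schur test with weights
`D(x)^{1/2}` gives `‖D(x)^{-1/2} B D(x)^{-1/2}‖ ≤ ρ`: the `j`-th row and column of `B` both sum to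
`2(1 − W_jj) ≤ ρ D(x)_jj`. Hence `D(x⁺)_jj ≤ (1 + C₂²‖g(x)‖) D(x)_jj`, and taking square roots
finishes the proof.
-/

section RealInequalities

theorem sqrt_le_one_add_sqrt_mul_sqrt {a b c : ℝ} (hc : 0 ≤ c) (h : a ≤ (1 + c) * b) :
    √a ≤ (1 + √c) * √b :=
  calc √a ≤ √((1 + c) * b) := Real.sqrt_le_sqrt h
    _ = √(1 + c) * √b := Real.sqrt_mul (by positivity) b
    _ ≤ (1 + √c) * √b := by
      gcongr
      rw [Real.sqrt_le_left (by positivity)]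
      nlinarith [Real.sq_sqrt hc, Real.sqrt_nonneg c]

theorem le_div_add_mul_add {c s t : ℝ} (hc : 0 ≤ c) (hts : t ≤ s) (htc : 0 < t + c) :
    t ≤ s / (s + c) * (t + c) := by
  rw [div_mul_eq_mul_div, le_div_iff₀ (by linarith)]
  linarith [mul_le_mul_of_nonneg_right hts hc]

end RealInequalities

section OperatorNorm

open scoped Matrix.Norms.L2Operator

variable {ι κ 𝕜 : Type*} [Fintype κ] [RCLike 𝕜]

theorem norm_mulVec_apply_sq_le_of_sum_norm_mul_le {A : Matrix ι κ 𝕜} {q : κ → ℝ} {i : ι} {r : ℝ}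
    (hq : ∀ j, 0 < q j) (hrow : ∑ j, ‖A i j‖ * q j ≤ r) (u : κ → 𝕜) :
    ‖(A *ᵥ u) i‖ ^ 2 ≤ r * ∑ j, ‖A i j‖ * (‖u j‖ ^ 2 / q j) := by
  have hq' (j : κ) := (hq j).le
  calc ‖(A *ᵥ u) i‖ ^ 2 ≤ (∑ j, ‖A i j‖ * ‖u j‖) ^ 2 := by
        gcongr
        exact (norm_sum_le _ _).trans_eq (by simp only [norm_mul])
    _ ≤ (∑ j, ‖A i j‖ * q j) * ∑ j, ‖A i j‖ * (‖u j‖ ^ 2 / q j) := by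
        refine Finset.sum_sq_le_sum_mul_sum_of_sq_le_mul _ (fun j _ ↦ ?_) (fun j _ ↦ ?_)
          fun j _ ↦ le_of_eq ?_
        · have := hq' j; positivity
        · have := hq' j; positivity
        · have := (hq j).ne'; field_simp
    _ ≤ r * ∑ j, ‖A i j‖ * (‖u j‖ ^ 2 / q j) := by
        gcongr
        exact Finset.sum_nonneg fun j _ ↦ by have := hq' j; positivity

variable [Fintype ι] [DecidableEq κ]

theorem norm_mulVec_apply_le_l2_opNorm (A : Matrix ι κ 𝕜) (v : κ → 𝕜) (i : ι) :
    ‖(A *ᵥ v) i‖ ≤ ‖A‖ * ‖WithLp.toLp 2 v‖ :=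
  (PiLp.norm_apply_le (WithLp.toLp 2 (A *ᵥ v)) i).trans
    (A.l2_opNorm_mulVec (WithLp.toLp 2 v))

/-- The Schur test. -/
theorem l2_opNorm_le_sqrt_mul_of_sum_norm_mul_le {A : Matrix ι κ 𝕜} {p : ι → ℝ} {q : κ → ℝ}
    {a b : ℝ} (hq : ∀ j, 0 < q j) (ha : 0 ≤ a)
    (hrow : ∀ i, ∑ j, ‖A i j‖ * q j ≤ a * p i) (hcol : ∀ j, ∑ i, ‖A i j‖ * p i ≤ b * q j) :
    ‖A‖ ≤ √(a * b) := by
  refine ContinuousLinearMap.opNorm_le_bound _ (Real.sqrt_nonneg _) fun u ↦ ?_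
  have hsq : ∑ i, ‖(A *ᵥ u) i‖ ^ 2 ≤ a * b * ∑ j, ‖u j‖ ^ 2 :=
    calc ∑ i, ‖(A *ᵥ u) i‖ ^ 2
        ≤ ∑ i, a * p i * ∑ j, ‖A i j‖ * (‖u j‖ ^ 2 / q j) := by
          gcongr with i
          exact norm_mulVec_apply_sq_le_of_sum_norm_mul_le hq (hrow i) u
      _ = a * ∑ j, (∑ i, ‖A i j‖ * p i) * (‖u j‖ ^ 2 / q j) := by
          simp only [Finset.mul_sum, Finset.sum_mul]
          rw [Finset.sum_comm]
          exact Finset.sum_congr rfl fun j _ ↦ Finset.sum_congr rfl fun i _ ↦ by ring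
      _ ≤ a * ∑ j, b * q j * (‖u j‖ ^ 2 / q j) := by
          gcongr with j
          · have := (hq j).le; positivity
          · exact hcol j
      _ = a * b * ∑ j, ‖u j‖ ^ 2 := by
          rw [Finset.mul_sum, Finset.mul_sum]
          exact Finset.sum_congr rfl fun j _ ↦ by have := (hq j).ne'; field_simp
  rw [EuclideanSpace.norm_eq, EuclideanSpace.norm_eq,
    ← Real.sqrt_mul' _ (Finset.sum_nonneg fun j _ ↦ sq_nonneg _)]
  exact Real.sqrt_le_sqrt hsq

theorem l2_opNorm_diagonal_inv_sqrt_mul_mul_diagonal_inv_sqrt_le {B : Matrix κ κ ℝ} {D : κ → ℝ}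
    {ρ : ℝ} (hB : ∀ i j, 0 ≤ B i j) (hD : ∀ i, 0 < D i) (hρ : 0 ≤ ρ)
    (hrow : ∀ i, ∑ j, B i j ≤ ρ * D i) (hcol : ∀ j, ∑ i, B i j ≤ ρ * D j) :
    ‖diagonal (fun i ↦ (√(D i))⁻¹) * B * diagonal (fun i ↦ (√(D i))⁻¹)‖ ≤ ρ := by
  have hs (i : κ) : 0 < √(D i) := Real.sqrt_pos.2 (hD i)
  have hentry (i j : κ) : ‖(diagonal (fun i ↦ (√(D i))⁻¹) * B * diagonal fun i ↦ (√(D i))⁻¹) i j‖ =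
      (√(D i))⁻¹ * B i j * (√(D j))⁻¹ := by
    rw [mul_diagonal, diagonal_mul, Real.norm_of_nonneg]
    have := hB i j
    positivity
  rw [← Real.sqrt_mul_self hρ]
  refine l2_opNorm_le_sqrt_mul_of_sum_norm_mul_le hs hρ (p := fun i ↦ √(D i))
    (fun i ↦ ?_) fun j ↦ ?_
  · calc _ = (∑ j, B i j) / √(D i) := by
          rw [Finset.sum_div]
          exact Finset.sum_congr rfl fun j _ ↦ by rw [hentry]; have := (hs j).ne'; field_simp
      _ ≤ ρ * D i / √(D i) := by gcongr; exact hrow i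
      _ = ρ * √(D i) := by rw [mul_div_assoc, Real.div_sqrt]
  · calc _ = (∑ i, B i j) / √(D j) := by
          rw [Finset.sum_div]
          exact Finset.sum_congr rfl fun i _ ↦ by rw [hentry]; have := (hs i).ne'; field_simp
      _ ≤ ρ * D j / √(D j) := by gcongr; exact hcol j
      _ = ρ * √(D j) := by rw [mul_div_assoc, Real.div_sqrt]

theorem l2_opNorm_one_le : ‖(1 : Matrix κ κ 𝕜)‖ ≤ 1 := by
  rw [← diagonal_one, l2_opNorm_diagonal]
  exact (pi_norm_le_iff_of_nonneg zero_le_one).2 fun i ↦ by simp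

theorem l2_opNorm_diagonal_inv_sqrt_le {D : κ → ℝ} {d : ℝ} (hd : 0 < d) (hD : ∀ i, d ≤ D i) :
    ‖diagonal (fun i ↦ (√(D i))⁻¹)‖ ≤ (√d)⁻¹ := by
  rw [l2_opNorm_diagonal, pi_norm_le_iff_of_nonneg (by positivity)]
  intro i
  rw [Real.norm_of_nonneg (by positivity)]
  have := hD i
  gcongr

end OperatorNorm

section DoublyStochastic

theorem mem_doublyStochastic_of_isSymm {ι R : Type*} [Fintype ι] [DecidableEq ι] [CommSemiring R]
    [PartialOrder R] [IsOrderedRing R] {W : Matrix ι ι R} (hsymm : W.IsSymm)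
    (hnonneg : ∀ i j, 0 ≤ W i j) (hone : W *ᵥ 1 = 1) : W ∈ doublyStochastic R ι :=
  mem_doublyStochastic.2 ⟨hnonneg, hone, by rw [← mulVec_transpose, hsymm.eq, hone]⟩

variable {n : ℕ} {W : Matrix (Fin n) (Fin n) ℝ}

theorem Bmat_apply (W : Matrix (Fin n) (Fin n) ℝ) (i j : Fin n) :
    Bmat W i j = W i j + if i = j then 1 - 2 * W i i else 0 := by
  by_cases h : i = j
  · subst h
    simp only [Bmat, Matrix.add_apply, Matrix.sub_apply, Matrix.smul_apply, one_apply_eq,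
      diagonal_apply_eq, smul_eq_mul, if_true]
    ring
  · simp [Bmat, h]

theorem Bmat_transpose (W : Matrix (Fin n) (Fin n) ℝ) : Bmat Wᵀ = (Bmat W)ᵀ := by
  simp [Bmat]

theorem Bmat_nonneg (hW : W ∈ doublyStochastic ℝ (Fin n)) (i j : Fin n) : 0 ≤ Bmat W i j := by
  rw [Bmat_apply]
  split_ifs with h
  · subst h
    linarith [le_one_of_mem_doublyStochastic hW (i := i) (j := i)]
  · simpa using nonneg_of_mem_doublyStochastic hW

theorem sum_row_Bmat (hW : W ∈ doublyStochastic ℝ (Fin n)) (i : Fin n) :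
    ∑ j, Bmat W i j = 2 * (1 - W i i) := by
  simp only [Bmat_apply, Finset.sum_add_distrib, sum_row_of_mem_doublyStochastic hW,
    Finset.sum_ite_eq, Finset.mem_univ, if_true]
  ring

theorem sum_col_Bmat (hW : W ∈ doublyStochastic ℝ (Fin n)) (j : Fin n) :
    ∑ i, Bmat W i j = 2 * (1 - W j j) := by
  simpa [Bmat_transpose] using sum_row_Bmat (transpose_mem_doublyStochastic_iff.2 hW) j

end DoublyStochastic

section NetworkNewton

open scoped Matrix.Norms.L2Operator

variable {n : ℕ} {W : Matrix (Fin n) (Fin n) ℝ} {f : Fin n → ℝ → ℝ} {α : ℝ} {x z : Fin n → ℝ}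

theorem eucNorm_eq_norm_toLp (v : Fin n → ℝ) : eucNorm v = ‖WithLp.toLp 2 v‖ := by
  simp [eucNorm, EuclideanSpace.norm_eq]

theorem eucNorm_Dhalf_mulVec_le {c : ℝ} (hc : 0 ≤ c)
    (h : ∀ j, √(dEntry W f α z j) ≤ c * √(dEntry W f α x j)) (y : Fin n → ℝ) :
    eucNorm (Dhalf W f α z *ᵥ y) ≤ c * eucNorm (Dhalf W f α x *ᵥ y) := by
  simp only [eucNorm, Dhalf, mulVec_diagonal]
  rw [← Real.sqrt_sq hc, ← Real.sqrt_mul (sq_nonneg c), Finset.mul_sum]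
  gcongr with j
  calc (√(dEntry W f α z j) * y j) ^ 2 = √(dEntry W f α z j) ^ 2 * y j ^ 2 := mul_pow _ _ _
    _ ≤ (c * √(dEntry W f α x j)) ^ 2 * y j ^ 2 := by gcongr; exact h j
    _ = c ^ 2 * (√(dEntry W f α x j) * y j) ^ 2 := by ring

theorem add_mul_le_dEntry {m w : ℝ} (hα : 0 ≤ α) {i : Fin n} (hw : W i i ≤ w)
    (hm : m ≤ d2 f i (x i)) : 2 * (1 - w) + α * m ≤ dEntry W f α x i := by
  rw [dEntry, add_comm]
  gcongr

theorem dEntry_le_add_mul_abs_sub {L : ℝ} (hα : 0 ≤ α) {j : Fin n}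
    (hLip : ∀ s s', |d2 f j s - d2 f j s'| ≤ L * |s - s'|) :
    dEntry W f α z j ≤ dEntry W f α x j + α * (L * |z j - x j|) := by
  have h : d2 f j (z j) ≤ d2 f j (x j) + L * |z j - x j| := by
    linarith [le_abs_self (d2 f j (z j) - d2 f j (x j)), hLip (z j) (x j)]
  have := mul_le_mul_of_nonneg_left h hα
  simp only [dEntry]
  linarith

theorem l2_opNorm_Hhatinv_le {ρ d : ℝ} (hB : ∀ i j, 0 ≤ Bmat W i j) (hρ : 0 ≤ ρ) (hd : 0 < d)
    (hD : ∀ i, d ≤ dEntry W f α x i) (hrow : ∀ i, ∑ j, Bmat W i j ≤ ρ * dEntry W f α x i)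
    (hcol : ∀ j, ∑ i, Bmat W i j ≤ ρ * dEntry W f α x j) :
    ‖Hhatinv W f α x‖ ≤ (1 + ρ) / d := by
  have hP : ‖Dinvhalf W f α x‖ ≤ (√d)⁻¹ := l2_opNorm_diagonal_inv_sqrt_le hd hD
  have hS : ‖Dinvhalf W f α x * Bmat W * Dinvhalf W f α x‖ ≤ ρ :=
    l2_opNorm_diagonal_inv_sqrt_mul_mul_diagonal_inv_sqrt_le hB (fun i ↦ hd.trans_le (hD i)) hρ
      hrow hcol
  calc ‖Hhatinv W f α x‖
      ≤ ‖Dinvhalf W f α x‖ * ‖1 + Dinvhalf W f α x * Bmat W * Dinvhalf W f α x‖ *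
          ‖Dinvhalf W f α x‖ := norm_mul₃_le
    _ ≤ (√d)⁻¹ * (1 + ρ) * (√d)⁻¹ := by
        gcongr
        exact norm_add_le_of_le l2_opNorm_one_le hS
    _ = (1 + ρ) / d := by
        rw [mul_right_comm, ← mul_inv, Real.mul_self_sqrt hd.le, inv_mul_eq_div]

theorem l2_opNorm_Hhatinv_le_of_mem_doublyStochastic {δ Δ m : ℝ}
    (hW : W ∈ doublyStochastic ℝ (Fin n)) (hWdiag : ∀ i, δ ≤ W i i ∧ W i i ≤ Δ)
    (hδ : δ ≤ 1) (hα : 0 ≤ α) (hm : 0 ≤ m) (hd2 : ∀ i, m ≤ d2 f i (x i))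
    (hd : 0 < 2 * (1 - Δ) + α * m) :
    ‖Hhatinv W f α x‖ ≤
      (1 + 2 * (1 - δ) / (2 * (1 - δ) + α * m)) / (2 * (1 - Δ) + α * m) := by
  have hαm : 0 ≤ α * m := mul_nonneg hα hm
  have hρ : 0 ≤ 2 * (1 - δ) / (2 * (1 - δ) + α * m) := by
    have := sub_nonneg.2 hδ
    positivity
  have hsum (i : Fin n) :
      2 * (1 - W i i) ≤ 2 * (1 - δ) / (2 * (1 - δ) + α * m) * dEntry W f α x i :=
    (le_div_add_mul_add hαm (by linarith [(hWdiag i).1]) (by linarith [(hWdiag i).2])).trans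
      (mul_le_mul_of_nonneg_left (add_mul_le_dEntry hα le_rfl (hd2 i)) hρ)
  exact l2_opNorm_Hhatinv_le (Bmat_nonneg hW) hρ hd
    (fun i ↦ add_mul_le_dEntry hα (hWdiag i).2 (hd2 i))
    (fun i ↦ (sum_row_Bmat hW i).trans_le (hsum i)) fun j ↦ (sum_col_Bmat hW j).trans_le (hsum j)

theorem abs_upd_apply_sub_le {p : Fin n → ℝ} {pmin ε : ℝ} {i : Fin n} (hpmin : 0 < pmin)
    (hp : pmin ≤ p i) (hε : 0 ≤ ε) (j : Fin n) :
    |upd W f α p ε x i j - x j| ≤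
      ε / pmin * (‖Hhatinv W f α x‖ * eucNorm (gvec W f α x)) := by
  have hpi : 0 < p i := hpmin.trans_le hp
  rw [eucNorm_eq_norm_toLp]
  rcases eq_or_ne j i with rfl | hj
  · rw [upd, Function.update_self, sub_sub_cancel_left, abs_neg, abs_mul,
      abs_of_nonneg (by positivity), ← Real.norm_eq_abs]
    gcongr
    exact norm_mulVec_apply_le_l2_opNorm _ _ _
  · rw [upd, Function.update_of_ne hj, sub_self, abs_zero]
    positivity

theorem dEntry_upd_le {p : Fin n → ℝ} {pmin ε L Lam d : ℝ} {i j : Fin n} (hα : 0 ≤ α)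
    (hpmin : 0 < pmin) (hp : pmin ≤ p i) (hε : 0 ≤ ε) (hL : 0 ≤ L)
    (hLip : ∀ s s', |d2 f j s - d2 f j s'| ≤ L * |s - s'|) (hH : ‖Hhatinv W f α x‖ ≤ Lam)
    (hd : 0 < d) (hD : d ≤ dEntry W f α x j) :
    dEntry W f α (upd W f α p ε x i) j ≤
      (1 + ε * α * L * Lam / (pmin * d) * eucNorm (gvec W f α x)) * dEntry W f α x j := by
  have hLam : 0 ≤ Lam := (norm_nonneg _).trans hH
  have hg : 0 ≤ eucNorm (gvec W f α x) := Real.sqrt_nonneg _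
  calc dEntry W f α (upd W f α p ε x i) j
      ≤ dEntry W f α x j + α * (L * |upd W f α p ε x i j - x j|) :=
        dEntry_le_add_mul_abs_sub hα hLip
    _ ≤ dEntry W f α x j + α * (L * (ε / pmin * (Lam * eucNorm (gvec W f α x)))) := by
        gcongr
        exact (abs_upd_apply_sub_le hpmin hp hε j).trans (by gcongr)
    _ = dEntry W f α x j + ε * α * L * Lam / (pmin * d) * eucNorm (gvec W f α x) * d := by
        field_simp
    _ ≤ dEntry W f α x j +
          ε * α * L * Lam / (pmin * d) * eucNorm (gvec W f α x) * dEntry W f α x j := by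
        gcongr
    _ = (1 + ε * α * L * Lam / (pmin * d) * eucNorm (gvec W f α x)) * dEntry W f α x j := by
        ring

end NetworkNewton

open scoped Matrix.Norms.L2Operator in
theorem stmt16_general {n : ℕ} {W : Matrix (Fin n) (Fin n) ℝ}
    (hW : W ∈ doublyStochastic ℝ (Fin n)) {δ Δ : ℝ} (hWdiag : ∀ i, δ ≤ W i i ∧ W i i ≤ Δ)
    {f : Fin n → ℝ → ℝ} (_hf : ∀ i, ContDiff ℝ 2 (f i)) {m α : ℝ} (hm : 0 ≤ m) (hα : 0 ≤ α)
    (hd : 0 < 2 * (1 - Δ) + α * m) (hd2 : ∀ i s, m ≤ d2 f i s) {p : Fin n → ℝ} {pmin : ℝ}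
    (hpmin : 0 < pmin) (hp : ∀ i, pmin ≤ p i) {L : ℝ}
    (hLip : ∀ i s s', |d2 f i s - d2 f i s'| ≤ L * |s - s'|) {ρ Lam ε C2 : ℝ}
    (hρ : ρ = 2 * (1 - δ) / (2 * (1 - δ) + α * m))
    (hLam : Lam = (1 + ρ) / (2 * (1 - Δ) + α * m)) (hε : 0 ≤ ε)
    (hC2 : C2 = √(ε * α * L * Lam / (pmin * (2 * (1 - Δ) + α * m)))) (x : Fin n → ℝ) (i : Fin n)
    (y : Fin n → ℝ) :
    eucNorm (Dhalf W f α (upd W f α p ε x i) *ᵥ y) ≤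
      (1 + C2 * √(eucNorm (gvec W f α x))) * eucNorm (Dhalf W f α x *ᵥ y) := by
  have hL : 0 ≤ L := by simpa using (abs_nonneg _).trans (hLip i 1 0)
  have hD (j : Fin n) : 2 * (1 - Δ) + α * m ≤ dEntry W f α x j :=
    add_mul_le_dEntry hα (hWdiag j).2 (hd2 j (x j))
  have hH := l2_opNorm_Hhatinv_le_of_mem_doublyStochastic hW hWdiag
    ((hWdiag i).1.trans (le_one_of_mem_doublyStochastic hW)) hα hm (fun j ↦ hd2 j (x j)) hd
  rw [← hρ, ← hLam] at hH
  have hLam0 : 0 ≤ Lam := (norm_nonneg _).trans hH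
  have hg : 0 ≤ eucNorm (gvec W f α x) := Real.sqrt_nonneg _
  rw [hC2, ← Real.sqrt_mul (by positivity)]
  exact eucNorm_Dhalf_mulVec_le (by positivity) (fun j ↦ sqrt_le_one_add_sqrt_mul_sqrt
    (by positivity) (dEntry_upd_le hα hpmin (hp i) hε hL (hLip j) hH hd (hD j))) y

/-- One-step control of the weighted norm: with `x⁺ = x^(i)`,
`‖D(x⁺)^{1/2} y‖ ≤ (1 + C₂‖g(x)‖^{1/2})‖D(x)^{1/2} y‖`. -/
theorem stmt16 (n : ℕ) (hn : 1 ≤ n)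
    (W : Matrix (Fin n) (Fin n) ℝ) (hWsymm : W.IsSymm)
    (hWnonneg : ∀ i j, 0 ≤ W i j) (hWlt : ∀ i j, W i j < 1)
    (hWone : W.mulVec (fun _ => 1) = fun _ => 1)
    (hWnull : ∀ x : Fin n → ℝ, ((1 - W).mulVec x = 0 ↔ ∃ c : ℝ, x = fun _ => c))
    (δ Δ : ℝ) (hδ : 0 < δ) (hδΔ : δ ≤ Δ) (hΔ : Δ < 1)
    (hWdiag : ∀ i, δ ≤ W i i ∧ W i i ≤ Δ)
    (f : Fin n → ℝ → ℝ) (hf : ∀ i, ContDiff ℝ 2 (f i))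
    (hconv : ∀ i, ConvexOn ℝ Set.univ (f i))
    (m M : ℝ) (hm : 0 < m) (hmM : m ≤ M)
    (hd2 : ∀ i s, m ≤ d2 f i s ∧ d2 f i s ≤ M)
    (α : ℝ) (hα : 0 < α)
    (p : Fin n → ℝ) (pmin pmax : ℝ) (hpmin : 0 < pmin) (hpmax : pmax < 1)
    (hp : ∀ i, pmin ≤ p i ∧ p i ≤ pmax) (hpsum : ∑ i, p i = 1)
    (L : ℝ) (hLip : ∀ i s s', |d2 f i s - d2 f i s'| ≤ L * |s - s'|)
    (ρ Lam : ℝ) (hρ : ρ = 2 * (1 - δ) / (2 * (1 - δ) + α * m))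
    (hLam : Lam = (1 + ρ) / (2 * (1 - Δ) + α * m))
    (ε : ℝ) (hε : 0 < ε)
    (C2 : ℝ) (hC2 : C2 = Real.sqrt (ε * α * L * Lam / (pmin * (2 * (1 - Δ) + α * m)))) :
    ∀ (x : Fin n → ℝ) (i : Fin n) (y : Fin n → ℝ),
      eucNorm ((Dhalf W f α (upd W f α p ε x i)).mulVec y) ≤
        (1 + C2 * Real.sqrt (eucNorm (gvec W f α x))) *
          eucNorm ((Dhalf W f α x).mulVec y) := by
  have hW := mem_doublyStochastic_of_isSymm hWsymm hWnonneg hWone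
  exact stmt16_general hW hWdiag hf hm.le hα.le (by nlinarith) (fun i s ↦ (hd2 i s).1) hpmin
    (fun i ↦ (hp i).1) hLip hρ hLam hε.le hC2
end
end
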